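/- For 0 < β ≤ α < 1/2, F(α,β) ≥ f(β), where F(α,β) = 2(α ln(α/(1-β)) + (1-α) ln((1-α)/β)) / (Φ⁻¹(α) + Φ⁻¹(β))² and f(β) = ((1-2β)/2) ln((1-β)/β) / (Φ⁻¹(β))². -/

import Mathlib

open Real Set Filter Topology

noncomputable def phi (y : ℝ) : ℝ := (Real.sqrt (2 * Real.pi))⁻¹ * Real.exp (-y ^ 2 / 2)

noncomputable def Phi (x : ℝ) : ℝ := ∫ y in Set.Iic x, phi y

noncomputable def PhiInv (a : ℝ) : ℝ := Function.invFun Phi a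

/-!
Write `1 - α = Φ x` and `β = Φ (-y)` with `0 < x ≤ y`. The numerator of `F(α, β)` is then
`2 KL(Φ x, Φ (-y))`, where `KL` is the relative entropy of two Bernoulli laws, and its denominator
is `(x + y)²`; the symmetric efficiency is the value at `x = y`. So it suffices that
`q x = KL(Φ x, Φ (-y)) / (x + y)²` is at least `q y` on `[0, y]`.

The derivative of `q` has the sign of an antitone function, so `q` is smallest at an endpoint, and
`q y ≤ q 0` follows by comparing power series. The antitonicity is a differential inequality for
the log-odds `ℓ = logit ∘ Φ`; it holds because `0 ≤ ℓ'' x ≤ x ℓ' x` for `0 ≤ x`, which amounts to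
`x Φ (1 - Φ) ≤ φ (2 Φ - 1) ≤ 2 x Φ (1 - Φ)`, a two-sided bound of Mills-ratio type.
-/

section Order

variable {ι κ : Type*} [LinearOrder ι] [Preorder κ] [TopologicalSpace κ] [OrderClosedTopology κ]
  {f : ι → κ} {a x : ι} {l : κ}

theorem le_of_monotoneOn_Ioi_of_tendsto_atTop (hf : MonotoneOn f (Ioi a))
    (hlim : Tendsto f atTop (𝓝 l)) (hx : a < x) : f x ≤ l :=
  have : Nonempty ι := ⟨a⟩
  ge_of_tendsto hlim <| (eventually_ge_atTop x).mono fun _ ht ↦ hf hx (hx.trans_le ht) ht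

theorem le_of_antitoneOn_Ioi_of_tendsto_atTop (hf : AntitoneOn f (Ioi a))
    (hlim : Tendsto f atTop (𝓝 l)) (hx : a < x) : l ≤ f x :=
  le_of_monotoneOn_Ioi_of_tendsto_atTop (κ := κᵒᵈ) hf hlim hx

end Order

section Calculus

variable {f f' f'' : ℝ → ℝ} {x y : ℝ}

theorem monotoneOn_of_hasDerivAt_nonneg {s : Set ℝ} (hs : Convex ℝ s)
    (hf : ∀ t ∈ s, HasDerivAt f (f' t) t) (hf' : ∀ t ∈ s, 0 ≤ f' t) : MonotoneOn f s :=
  monotoneOn_of_hasDerivWithinAt_nonneg hs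
    (fun t ht ↦ (hf t ht).continuousAt.continuousWithinAt)
    (fun t ht ↦ (hf t (interior_subset ht)).hasDerivWithinAt)
    (fun t ht ↦ hf' t (interior_subset ht))

theorem antitoneOn_of_hasDerivAt_nonpos {s : Set ℝ} (hs : Convex ℝ s)
    (hf : ∀ t ∈ s, HasDerivAt f (f' t) t) (hf' : ∀ t ∈ s, f' t ≤ 0) : AntitoneOn f s :=
  antitoneOn_of_hasDerivWithinAt_nonpos hs
    (fun t ht ↦ (hf t ht).continuousAt.continuousWithinAt)
    (fun t ht ↦ (hf t (interior_subset ht)).hasDerivWithinAt)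
    (fun t ht ↦ hf' t (interior_subset ht))

theorem min_le_of_hasDerivAt_mul_antitoneOn {w g : ℝ → ℝ} {a b : ℝ}
    (hf : ∀ t ∈ Icc a b, HasDerivAt f (w t * g t) t) (hw : ∀ t ∈ Icc a b, 0 ≤ w t)
    (hg : AntitoneOn g (Icc a b)) (hx : x ∈ Icc a b) : min (f a) (f b) ≤ f x := by
  rcases le_total 0 (g x) with hgx | hgx
  · have hsub : Icc a x ⊆ Icc a b := Icc_subset_Icc_right hx.2
    have hmono : MonotoneOn f (Icc a x) :=
      monotoneOn_of_hasDerivAt_nonneg (convex_Icc a x) (fun t ht ↦ hf t (hsub ht))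
        fun t ht ↦ mul_nonneg (hw t (hsub ht)) (hgx.trans (hg (hsub ht) hx ht.2))
    exact min_le_of_left_le (hmono (left_mem_Icc.2 hx.1) (right_mem_Icc.2 hx.1) hx.1)
  · have hsub : Icc x b ⊆ Icc a b := Icc_subset_Icc_left hx.1
    have hanti : AntitoneOn f (Icc x b) :=
      antitoneOn_of_hasDerivAt_nonpos (convex_Icc x b) (fun t ht ↦ hf t (hsub ht))
        fun t ht ↦ mul_nonpos_of_nonneg_of_nonpos (hw t (hsub ht))
          ((hg hx (hsub ht) ht.1).trans hgx)
    exact min_le_of_right_le (hanti (left_mem_Icc.2 hx.2) (right_mem_Icc.2 hx.2) hx.2)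

theorem mul_deriv_le_of_second_deriv_le_mul_deriv (hf : ∀ t, 0 ≤ t → HasDerivAt f (f' t) t)
    (hf' : ∀ t, 0 ≤ t → HasDerivAt f' (f'' t) t) (hf'' : ∀ t, 0 ≤ t → f'' t ≤ t * f' t)
    (hnonneg : ∀ t, 0 ≤ t → 0 ≤ f t) (hx : 0 ≤ x) : x * f' x ≤ (1 + x ^ 2) * f x := by
  have hmono : MonotoneOn (fun t ↦ (1 + t ^ 2) * f t - t * f' t) (Ici 0) := by
    refine monotoneOn_of_hasDerivAt_nonneg (f' := fun t ↦ t * (2 * f t + (t * f' t - f'' t)))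
      (convex_Ici 0) (fun t ht ↦ ?_) fun t ht ↦ ?_
    · refine ((((hasDerivAt_pow 2 t).const_add 1).mul (hf t ht)).sub
        ((hasDerivAt_id t).mul (hf' t ht))).congr_deriv ?_
      simp only [id]
      ring
    · exact mul_nonneg ht (by linarith [hnonneg t ht, hf'' t ht])
  have h := hmono self_mem_Ici hx hx
  have h0 := hnonneg 0 le_rfl
  simp only at h
  linarith

theorem add_mul_sub_le_of_convexOn_of_hasDerivAt {s : Set ℝ} {d : ℝ} (hf : ConvexOn ℝ s f)
    (hx : x ∈ s) (hy : y ∈ s) (hxy : x ≤ y) (hd : HasDerivAt f d x) : f x + d * (y - x) ≤ f y := by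
  rcases hxy.eq_or_lt with rfl | hlt
  · simp
  · have hslope := hf.le_slope_of_hasDerivAt hx hy hlt hd
    rw [slope_def_field, le_div_iff₀ (sub_pos.2 hlt)] at hslope
    linarith

theorem add_mul_deriv_le_of_convexOn {s : Set ℝ} {d : ℝ} (hf : ConvexOn ℝ s f) (hxs : x ∈ s)
    (hys : y ∈ s) (hfx : 0 ≤ f x) (hfy : 0 ≤ f y) (hd : HasDerivAt f d x)
    (hdx : x * d ≤ (1 + x ^ 2) * f x) (hx : 0 ≤ x) (hxy : x ≤ y) :
    (x + y) * d ≤ (1 + x * (x + y)) * (f x + f y) := by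
  have htangent : f x + d * (y - x) ≤ f y :=
    add_mul_sub_le_of_convexOn_of_hasDerivAt hf hxs hys hxy hd
  have hprod : x * (2 * x * f x) ≤ x * ((x + y) * (f x + f y)) := by
    gcongr <;> linarith
  calc (x + y) * d = 2 * (x * d) + d * (y - x) := by ring
    _ ≤ 2 * ((1 + x ^ 2) * f x) + (f y - f x) := by linarith
    _ = x * (2 * x * f x) + (f x + f y) := by ring
    _ ≤ (1 + x * (x + y)) * (f x + f y) := by linarith

end Calculus

section BinaryRelativeEntropy

variable {p q : ℝ}

/-- The log-odds `log (p / (1 - p))`, split so that it is differentiated termwise. -/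
noncomputable def logit (p : ℝ) : ℝ := log p - log (1 - p)

/-- The Kullback-Leibler divergence of the Bernoulli law with parameter `p` from the Bernoulli law
with parameter `q`. -/
noncomputable def binaryKL (p q : ℝ) : ℝ := p * log (p / q) + (1 - p) * log ((1 - p) / (1 - q))

theorem logit_one_sub (p : ℝ) : logit (1 - p) = -logit p := by simp [logit]

theorem logit_nonneg (hp : 1 / 2 ≤ p) (hp1 : p < 1) : 0 ≤ logit p :=
  sub_nonneg.2 <| log_le_log (by linarith) (by linarith)

theorem hasDerivAt_logit (hp0 : 0 < p) (hp1 : p < 1) :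
    HasDerivAt logit (1 / (p * (1 - p))) p := by
  have h0 : p ≠ 0 := hp0.ne'
  have h1 : 1 - p ≠ 0 := (sub_pos.2 hp1).ne'
  refine ((hasDerivAt_log h0).sub (((hasDerivAt_id p).const_sub 1).log h1)).congr_deriv ?_
  simp only [id]
  field_simp
  ring

theorem binaryKL_eq_neg_binEntropy_sub (hq0 : 0 < q) (hq1 : q < 1) (p : ℝ) :
    binaryKL p q = -binEntropy p - p * log q - (1 - p) * log (1 - q) := by
  have hlog : ∀ a b : ℝ, 0 < b → a * log (a / b) = a * log a - a * log b := fun a b hb ↦ by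
    rcases eq_or_ne a 0 with rfl | ha
    · simp
    · rw [log_div ha hb.ne', mul_sub]
  rw [binaryKL, hlog p q hq0, hlog _ _ (sub_pos.2 hq1), binEntropy, log_inv, log_inv]
  ring

theorem hasDerivAt_binaryKL_left (hp0 : 0 < p) (hp1 : p < 1) (hq0 : 0 < q) (hq1 : q < 1) :
    HasDerivAt (binaryKL · q) (logit p - logit q) p := by
  rw [funext (binaryKL_eq_neg_binEntropy_sub hq0 hq1)]
  refine (((hasDerivAt_binEntropy hp0.ne' hp1.ne).neg.sub ((hasDerivAt_id p).mul_const _)).sub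
    (((hasDerivAt_id p).const_sub 1).mul_const _)).congr_deriv ?_
  rw [logit, logit]
  ring

theorem binaryKL_one_sub_right (p : ℝ) :
    binaryKL p (1 - p) = (2 * p - 1) * log (p / (1 - p)) := by
  rw [binaryKL, sub_sub_cancel, ← inv_div p (1 - p), log_inv]
  ring

/- Both sides are power series in `v ^ 2`, with coefficients `2 / (2 n + 1)` and `2 / (n + 1)`. -/
theorem mul_log_one_add_sub_log_one_sub_le {v : ℝ} (hv : |v| < 1) :
    v * (log (1 + v) - log (1 - v)) ≤ -2 * log (1 - v ^ 2) := by
  have hsq : |v ^ 2| < 1 := by rwa [abs_pow, sq_lt_one_iff₀ (abs_nonneg v)]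
  have hleft := (hasSum_log_sub_log_of_abs_lt_one hv).mul_left v
  have hright := (hasSum_pow_div_log_of_abs_lt_one hsq).mul_left 2
  rw [mul_neg, ← neg_mul] at hright
  refine hasSum_le (fun n ↦ ?_) hleft hright
  calc v * (2 * (1 / (2 * n + 1)) * v ^ (2 * n + 1))
      = 2 * ((v ^ 2) ^ (n + 1) / (2 * n + 1)) := by ring
    _ ≤ 2 * ((v ^ 2) ^ (n + 1) / (n + 1)) := by
      gcongr
      linarith [(n.cast_nonneg : (0 : ℝ) ≤ n)]

theorem binaryKL_one_sub_right_le (hp0 : 0 < p) (hp1 : p < 1) :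
    binaryKL p (1 - p) ≤ 4 * binaryKL (1 / 2) (1 - p) := by
  have h0 : 2 * p ≠ 0 := by positivity
  have h1 : 2 * (1 - p) ≠ 0 := mul_ne_zero two_ne_zero (sub_pos.2 hp1).ne'
  have h := mul_log_one_add_sub_log_one_sub_le (v := 2 * p - 1)
    (abs_lt.2 ⟨by linarith, by linarith⟩)
  rw [show 1 + (2 * p - 1) = 2 * p by ring, show 1 - (2 * p - 1) = 2 * (1 - p) by ring,
    show 1 - (2 * p - 1) ^ 2 = 2 * p * (2 * (1 - p)) by ring, ← log_div h0 h1,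
    mul_div_mul_left _ _ two_ne_zero, ← binaryKL_one_sub_right, log_mul h0 h1] at h
  refine h.trans_eq ?_
  rw [binaryKL, show (1 : ℝ) - 1 / 2 = 1 / 2 by norm_num, sub_sub_cancel, div_div, div_div, one_div,
    one_div, one_div, log_inv, log_inv]
  ring

end BinaryRelativeEntropy

section StandardNormal

theorem phi_eq_gaussianPDFReal : phi = ProbabilityTheory.gaussianPDFReal 0 1 := by
  ext x
  simp [phi, ProbabilityTheory.gaussianPDFReal]

theorem phi_pos (x : ℝ) : 0 < phi x := by
  rw [phi]
  positivity

theorem phi_neg (x : ℝ) : phi (-x) = phi x := by simp [phi]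

theorem hasDerivAt_phi (x : ℝ) : HasDerivAt phi (-x * phi x) x := by
  have hexponent : HasDerivAt (fun y : ℝ ↦ -y ^ 2 / 2) (-x) x :=
    ((hasDerivAt_pow 2 x).neg.div_const 2).congr_deriv (by ring)
  refine (hexponent.exp.const_mul (√(2 * π))⁻¹).congr_deriv ?_
  rw [phi]
  ring

theorem continuous_phi : Continuous phi :=
  continuous_iff_continuousAt.2 fun x ↦ (hasDerivAt_phi x).continuousAt

theorem integrable_phi : MeasureTheory.Integrable phi :=
  phi_eq_gaussianPDFReal ▸ ProbabilityTheory.integrable_gaussianPDFReal 0 1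

theorem integral_phi : ∫ x, phi x = 1 := by
  rw [phi_eq_gaussianPDFReal, ProbabilityTheory.integral_gaussianPDFReal_eq_one 0 one_ne_zero]

theorem tendsto_phi_atTop : Tendsto phi atTop (𝓝 0) := by
  have hexponent : Tendsto (fun x : ℝ ↦ -x ^ 2 / 2) atTop atBot :=
    (tendsto_neg_atTop_atBot.comp (tendsto_pow_atTop two_ne_zero)).atBot_div_const two_pos
  rw [← mul_zero (√(2 * π))⁻¹]
  exact (tendsto_exp_atBot.comp hexponent).const_mul _

theorem hasDerivAt_Phi (x : ℝ) : HasDerivAt Phi (phi x) x := by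
  have hPhi : Phi = fun t ↦ Phi 0 + ∫ s in (0 : ℝ)..t, phi s := by
    ext t
    rw [← intervalIntegral.integral_Iic_sub_Iic integrable_phi.integrableOn
      integrable_phi.integrableOn, Phi, Phi, add_sub_cancel]
  rw [hPhi]
  exact (continuous_phi.integral_hasStrictDerivAt 0 x).hasDerivAt.const_add _

theorem continuous_Phi : Continuous Phi :=
  continuous_iff_continuousAt.2 fun x ↦ (hasDerivAt_Phi x).continuousAt

theorem strictMono_Phi : StrictMono Phi := strictMono_of_hasDerivAt_pos hasDerivAt_Phi phi_pos

theorem Phi_neg (x : ℝ) : Phi (-x) = 1 - Phi x := by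
  have hsymm : Phi (-x) = ∫ t in Ioi x, phi t := by
    simpa only [Phi, phi_neg, neg_neg] using integral_comp_neg_Iic (-x) phi
  have hsplit := intervalIntegral.integral_Iic_add_Ioi (b := x) integrable_phi.integrableOn
    integrable_phi.integrableOn
  rw [integral_phi, ← hsymm] at hsplit
  exact eq_sub_of_add_eq' hsplit

theorem Phi_zero : Phi 0 = 1 / 2 := by
  have h := Phi_neg 0
  rw [neg_zero] at h
  linarith

theorem tendsto_Phi_atTop : Tendsto Phi atTop (𝓝 1) :=
  integral_phi ▸ (MeasureTheory.aecover_Iic tendsto_id).integral_tendsto_of_countably_generated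
    integrable_phi

theorem Phi_lt_one (x : ℝ) : Phi x < 1 :=
  (strictMono_Phi (lt_add_one x)).trans_le
    (strictMono_Phi.monotone.ge_of_tendsto tendsto_Phi_atTop _)

theorem one_sub_Phi_pos (x : ℝ) : 0 < 1 - Phi x := sub_pos.2 (Phi_lt_one x)

theorem Phi_pos (x : ℝ) : 0 < Phi x := by
  rw [← neg_neg x, Phi_neg]
  exact one_sub_Phi_pos (-x)

theorem half_le_Phi {x : ℝ} (hx : 0 ≤ x) : 1 / 2 ≤ Phi x := Phi_zero ▸ strictMono_Phi.monotone hx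

theorem Ioo_subset_range_Phi : Ioo 0 1 ⊆ range Phi := by
  have hbot : Tendsto Phi atBot (𝓝 0) := by
    simpa [Function.comp_def, Phi_neg] using
      (tendsto_Phi_atTop.comp tendsto_neg_atBot_atTop).const_sub 1
  exact fun a ha ↦ mem_range_of_exists_le_of_exists_ge continuous_Phi
    (hbot.eventually_le_const ha.1).exists (tendsto_Phi_atTop.eventually_const_le ha.2).exists

theorem Phi_PhiInv {a : ℝ} (ha : a ∈ Ioo 0 1) : Phi (PhiInv a) = a :=
  Function.invFun_eq (Ioo_subset_range_Phi ha)

end StandardNormal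

section LogOdds

variable {x y : ℝ}

theorem two_mul_mul_phi_le (hx : 0 ≤ x) : 2 * x * phi x ≤ 2 * Phi x - 1 := by
  have hmono : MonotoneOn (fun t ↦ 2 * Phi t - 1 - 2 * t * phi t) (Ici 0) := by
    refine monotoneOn_of_hasDerivAt_nonneg (f' := fun t ↦ 2 * t ^ 2 * phi t) (convex_Ici 0)
      (fun t _ ↦ ?_) fun t _ ↦ mul_nonneg (by positivity) (phi_pos t).le
    refine ((((hasDerivAt_Phi t).const_mul 2).sub_const 1).sub
      (((hasDerivAt_id t).const_mul 2).mul (hasDerivAt_phi t))).congr_deriv ?_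
    simp only [id]
    ring
  have h := hmono self_mem_Ici hx hx
  simp only [Phi_zero] at h
  linarith

theorem one_sub_sq_mul_le_two_mul_mul_phi (hx : 0 ≤ x) :
    (1 - x ^ 2) * (2 * Phi x - 1) ≤ 2 * x * phi x := by
  have hmono : MonotoneOn (fun t ↦ 2 * t * phi t - (1 - t ^ 2) * (2 * Phi t - 1)) (Ici 0) := by
    refine monotoneOn_of_hasDerivAt_nonneg (f' := fun t ↦ 2 * t * (2 * Phi t - 1)) (convex_Ici 0)
      (fun t _ ↦ ?_) fun t ht ↦ ?_
    · refine ((((hasDerivAt_id t).const_mul 2).mul (hasDerivAt_phi t)).sub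
        (((hasDerivAt_pow 2 t).const_sub 1).mul
          (((hasDerivAt_Phi t).const_mul 2).sub_const 1))).congr_deriv ?_
      simp only [id]
      ring
    · exact mul_nonneg (mul_nonneg zero_le_two ht) (by linarith [half_le_Phi ht])
  have h := hmono self_mem_Ici hx hx
  simp only [Phi_zero] at h
  linarith

theorem hasDerivAt_phi_mul_div_sub (c : ℝ) (hx : x ≠ 0) :
    HasDerivAt (fun t ↦ phi t * (2 * Phi t - 1) / t - c * (Phi t * (1 - Phi t)))
      (phi x * (2 * x * phi x - (1 - (c - 1) * x ^ 2) * (2 * Phi x - 1)) / x ^ 2) x := by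
  refine ((((hasDerivAt_phi x).mul (((hasDerivAt_Phi x).const_mul 2).sub_const 1)).div
    (hasDerivAt_id x) hx).sub (((hasDerivAt_Phi x).mul
      ((hasDerivAt_Phi x).const_sub 1)).const_mul c)).congr_deriv ?_
  simp only [id, Pi.mul_apply]
  field_simp
  ring

theorem tendsto_phi_mul_div_sub_atTop (c : ℝ) :
    Tendsto (fun t ↦ phi t * (2 * Phi t - 1) / t - c * (Phi t * (1 - Phi t))) atTop (𝓝 0) := by
  have hquot := (tendsto_phi_atTop.mul ((tendsto_Phi_atTop.const_mul 2).sub_const 1)).mul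
    tendsto_inv_atTop_zero
  have hvar := (tendsto_Phi_atTop.mul (tendsto_Phi_atTop.const_sub 1)).const_mul c
  simpa [div_eq_mul_inv] using hquot.sub hvar

theorem mul_Phi_mul_one_sub_Phi_le (hx : 0 ≤ x) :
    x * (Phi x * (1 - Phi x)) ≤ phi x * (2 * Phi x - 1) := by
  rcases hx.eq_or_lt with rfl | hpos
  · simp [Phi_zero]
  have hanti : AntitoneOn
      (fun t ↦ phi t * (2 * Phi t - 1) / t - 1 * (Phi t * (1 - Phi t))) (Ioi 0) := by
    refine antitoneOn_of_hasDerivAt_nonpos (convex_Ioi 0)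
      (fun t ht ↦ hasDerivAt_phi_mul_div_sub 1 (ne_of_gt ht)) fun t ht ↦ ?_
    refine div_nonpos_of_nonpos_of_nonneg
      (mul_nonpos_of_nonneg_of_nonpos (phi_pos t).le ?_) (sq_nonneg t)
    linarith [two_mul_mul_phi_le (le_of_lt ht)]
  have h := le_of_antitoneOn_Ioi_of_tendsto_atTop hanti (tendsto_phi_mul_div_sub_atTop 1) hpos
  rw [one_mul, sub_nonneg, le_div_iff₀ hpos] at h
  linarith

theorem phi_mul_le_two_mul_Phi_mul_one_sub_Phi (hx : 0 ≤ x) :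
    phi x * (2 * Phi x - 1) ≤ 2 * x * (Phi x * (1 - Phi x)) := by
  rcases hx.eq_or_lt with rfl | hpos
  · simp [Phi_zero]
  have hmono : MonotoneOn
      (fun t ↦ phi t * (2 * Phi t - 1) / t - 2 * (Phi t * (1 - Phi t))) (Ioi 0) := by
    refine monotoneOn_of_hasDerivAt_nonneg (convex_Ioi 0)
      (fun t ht ↦ hasDerivAt_phi_mul_div_sub 2 (ne_of_gt ht)) fun t ht ↦ ?_
    refine div_nonneg (mul_nonneg (phi_pos t).le ?_) (sq_nonneg t)
    linarith [one_sub_sq_mul_le_two_mul_mul_phi (le_of_lt ht)]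
  have h := le_of_monotoneOn_Ioi_of_tendsto_atTop hmono (tendsto_phi_mul_div_sub_atTop 2) hpos
  rw [sub_nonpos, div_le_iff₀ hpos] at h
  linarith

/-- The derivative `φ / (Φ (1 - Φ))` of the log-odds `logit ∘ Φ` of the standard normal law. -/
noncomputable def logitPhiDeriv (x : ℝ) : ℝ := phi x / (Phi x * (1 - Phi x))

theorem logitPhiDeriv_pos (x : ℝ) : 0 < logitPhiDeriv x :=
  div_pos (phi_pos x) (mul_pos (Phi_pos x) (one_sub_Phi_pos x))

theorem logit_Phi_neg (x : ℝ) : logit (Phi (-x)) = -logit (Phi x) := by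
  rw [Phi_neg, logit_one_sub]

theorem logit_Phi_nonneg (hx : 0 ≤ x) : 0 ≤ logit (Phi x) :=
  logit_nonneg (half_le_Phi hx) (Phi_lt_one x)

theorem hasDerivAt_logit_Phi (x : ℝ) :
    HasDerivAt (fun t ↦ logit (Phi t)) (logitPhiDeriv x) x := by
  refine ((hasDerivAt_logit (Phi_pos x) (Phi_lt_one x)).comp x (hasDerivAt_Phi x)).congr_deriv ?_
  rw [logitPhiDeriv, one_div_mul_eq_div]

theorem hasDerivAt_logitPhiDeriv (x : ℝ) :
    HasDerivAt logitPhiDeriv (logitPhiDeriv x * (logitPhiDeriv x * (2 * Phi x - 1) - x)) x := by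
  have h0 := (Phi_pos x).ne'
  have h1 := (one_sub_Phi_pos x).ne'
  refine ((hasDerivAt_phi x).div ((hasDerivAt_Phi x).mul ((hasDerivAt_Phi x).const_sub 1))
    (mul_ne_zero h0 h1)).congr_deriv ?_
  simp only [Pi.mul_apply, logitPhiDeriv]
  field_simp
  ring

theorem logitPhiDeriv_mul_mem_Icc (hx : 0 ≤ x) :
    logitPhiDeriv x * (2 * Phi x - 1) ∈ Icc x (2 * x) := by
  have hpos : 0 < Phi x * (1 - Phi x) := mul_pos (Phi_pos x) (one_sub_Phi_pos x)
  rw [logitPhiDeriv, div_mul_eq_mul_div, mem_Icc, le_div_iff₀ hpos, div_le_iff₀ hpos]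
  exact ⟨mul_Phi_mul_one_sub_Phi_le hx, phi_mul_le_two_mul_Phi_mul_one_sub_Phi hx⟩

theorem convexOn_logit_Phi : ConvexOn ℝ (Ici 0) fun t ↦ logit (Phi t) := by
  have hmono : MonotoneOn logitPhiDeriv (Ici 0) :=
    monotoneOn_of_hasDerivAt_nonneg (convex_Ici 0) (fun t _ ↦ hasDerivAt_logitPhiDeriv t)
      fun t ht ↦ mul_nonneg (logitPhiDeriv_pos t).le
        (sub_nonneg.2 (logitPhiDeriv_mul_mem_Icc ht).1)
  refine MonotoneOn.convexOn_of_deriv (convex_Ici 0)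
    (fun t _ ↦ (hasDerivAt_logit_Phi t).continuousAt.continuousWithinAt)
    (fun t _ ↦ (hasDerivAt_logit_Phi t).differentiableAt.differentiableWithinAt) ?_
  rw [funext fun t ↦ (hasDerivAt_logit_Phi t).deriv]
  exact hmono.mono interior_subset

theorem mul_logitPhiDeriv_le (hx : 0 ≤ x) :
    x * logitPhiDeriv x ≤ (1 + x ^ 2) * logit (Phi x) := by
  refine mul_deriv_le_of_second_deriv_le_mul_deriv (fun t _ ↦ hasDerivAt_logit_Phi t)
    (fun t _ ↦ hasDerivAt_logitPhiDeriv t) (fun t ht ↦ ?_) (fun t ↦ logit_Phi_nonneg) hx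
  rw [mul_comm t]
  exact mul_le_mul_of_nonneg_left (by linarith [(logitPhiDeriv_mul_mem_Icc ht).2])
    (logitPhiDeriv_pos t).le

theorem add_mul_logitPhiDeriv_le (hx : 0 ≤ x) (hxy : x ≤ y) :
    (x + y) * logitPhiDeriv x ≤ (1 + x * (x + y)) * (logit (Phi x) + logit (Phi y)) :=
  add_mul_deriv_le_of_convexOn convexOn_logit_Phi hx (hx.trans hxy) (logit_Phi_nonneg hx)
    (logit_Phi_nonneg (hx.trans hxy)) (hasDerivAt_logit_Phi x) (mul_logitPhiDeriv_le hx) hx hxy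

end LogOdds

section Efficiency

variable {x y : ℝ}

theorem hasDerivAt_binaryKL_Phi (y x : ℝ) :
    HasDerivAt (fun t ↦ binaryKL (Phi t) (Phi (-y)))
      (phi x * (logit (Phi x) + logit (Phi y))) x := by
  refine ((hasDerivAt_binaryKL_left (Phi_pos x) (Phi_lt_one x) (Phi_pos (-y))
    (Phi_lt_one (-y))).comp x (hasDerivAt_Phi x)).congr_deriv ?_
  rw [logit_Phi_neg, sub_neg_eq_add, mul_comm]

/-- Up to the factor `(t + y)⁻³`, the derivative of `binaryKL (Φ t) (Φ (-y)) / (t + y) ^ 2` in `t`;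
its sign decides where that quotient increases. -/
noncomputable def klRatioSlope (y t : ℝ) : ℝ :=
  (t + y) * (phi t * (logit (Phi t) + logit (Phi y))) - 2 * binaryKL (Phi t) (Phi (-y))

theorem hasDerivAt_binaryKL_Phi_div_sq (h : x + y ≠ 0) :
    HasDerivAt (fun t ↦ binaryKL (Phi t) (Phi (-y)) / (t + y) ^ 2)
      (((x + y) ^ 3)⁻¹ * klRatioSlope y x) x := by
  refine ((hasDerivAt_binaryKL_Phi y x).div (((hasDerivAt_id x).add_const y).pow 2)
    (pow_ne_zero 2 h)).congr_deriv ?_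
  simp only [id, Pi.pow_apply, klRatioSlope]
  field_simp
  ring

theorem hasDerivAt_klRatioSlope (y x : ℝ) :
    HasDerivAt (klRatioSlope y) (phi x * ((x + y) * logitPhiDeriv x
      - (1 + x * (x + y)) * (logit (Phi x) + logit (Phi y)))) x := by
  refine ((((hasDerivAt_id x).add_const y).mul ((hasDerivAt_phi x).mul
    ((hasDerivAt_logit_Phi x).add_const _))).sub
      ((hasDerivAt_binaryKL_Phi y x).const_mul 2)).congr_deriv ?_
  simp only [id, Pi.mul_apply]
  ring

theorem antitoneOn_klRatioSlope (y : ℝ) : AntitoneOn (klRatioSlope y) (Icc 0 y) :=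
  antitoneOn_of_hasDerivAt_nonpos (convex_Icc 0 y) (fun t _ ↦ hasDerivAt_klRatioSlope y t)
    fun t ht ↦ mul_nonpos_of_nonneg_of_nonpos (phi_pos t).le
      (sub_nonpos.2 (add_mul_logitPhiDeriv_le ht.1 ht.2))

theorem binaryKL_Phi_div_sq_le_zero (y : ℝ) :
    binaryKL (Phi y) (Phi (-y)) / (y + y) ^ 2 ≤ binaryKL (Phi 0) (Phi (-y)) / (0 + y) ^ 2 := by
  rw [Phi_zero, Phi_neg, zero_add, ← two_mul, mul_pow, ← div_div]
  gcongr
  rw [div_le_iff₀ (by norm_num)]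
  linarith [binaryKL_one_sub_right_le (Phi_pos y) (Phi_lt_one y)]

theorem binaryKL_Phi_div_sq_le (hx : 0 ≤ x) (hxy : x ≤ y) :
    binaryKL (Phi y) (Phi (-y)) / (y + y) ^ 2 ≤ binaryKL (Phi x) (Phi (-y)) / (x + y) ^ 2 := by
  rcases (hx.trans hxy).eq_or_lt with rfl | hy
  · rw [le_antisymm hxy hx]
  have hmin := min_le_of_hasDerivAt_mul_antitoneOn
    (fun t ht ↦ hasDerivAt_binaryKL_Phi_div_sq (add_pos_of_nonneg_of_pos ht.1 hy).ne')
    (fun t ht ↦ by have := ht.1; positivity) (antitoneOn_klRatioSlope y) ⟨hx, hxy⟩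
  rwa [min_eq_right (binaryKL_Phi_div_sq_le_zero y)] at hmin

end Efficiency

theorem asymmetric_efficiency_bound (α β : ℝ) (hβ : 0 < β) (hβα : β ≤ α) (hα : α < 1 / 2) :
    2 * (α * Real.log (α / (1 - β)) + (1 - α) * Real.log ((1 - α) / β))
        / (PhiInv α + PhiInv β) ^ 2
      ≥ ((1 - 2 * β) / 2 * Real.log ((1 - β) / β)) / (PhiInv β) ^ 2 := by
  have hΦα : Phi (PhiInv α) = α := Phi_PhiInv ⟨by linarith, by linarith⟩
  have hΦβ : Phi (PhiInv β) = β := Phi_PhiInv ⟨hβ, by linarith⟩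
  have hα0 : PhiInv α ≤ 0 := strictMono_Phi.le_iff_le.1 (by rw [hΦα, Phi_zero]; exact hα.le)
  have hle : PhiInv β ≤ PhiInv α := strictMono_Phi.le_iff_le.1 (by rwa [hΦα, hΦβ])
  have hratio := binaryKL_Phi_div_sq_le (neg_nonneg.2 hα0) (neg_le_neg hle)
  rw [neg_neg, Phi_neg, Phi_neg, hΦα, hΦβ] at hratio
  have hdiag := binaryKL_one_sub_right (1 - β)
  rw [sub_sub_cancel] at hdiag
  calc (1 - 2 * β) / 2 * log ((1 - β) / β) / PhiInv β ^ 2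
      = 2 * (binaryKL (1 - β) β / (-PhiInv β + -PhiInv β) ^ 2) := by
        rw [hdiag, ← two_mul, mul_pow, neg_sq, ← div_div]
        ring
    _ ≤ 2 * (binaryKL (1 - α) β / (-PhiInv α + -PhiInv β) ^ 2) := by gcongr
    _ = 2 * (α * log (α / (1 - β)) + (1 - α) * log ((1 - α) / β))
          / (PhiInv α + PhiInv β) ^ 2 := by
        rw [binaryKL, sub_sub_cancel, ← neg_add, neg_sq]
        ring
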